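/- arXiv:2104.13681 — 10 statements merged into one kernel-verified Lean document; each statement's English description precedes it below -/
import Mathlib

section
/- For integers k ≥ 1, n ≥ 2k, and any fixed element x ∈ {1,…,n}, the number of stable k-element subsets of {1,…,n} that contain x equals C(n−k−1, k−1). -/
/-- A subset `A` of `{1,…,n}` is *stable* if it contains no two cyclically
consecutive elements: no `i < n` with both `i` and `i+1` in `A`, and not both
`n` and `1` in `A`. -/
def IsStable (n : ℕ) (A : Finset ℕ) : Prop :=
  (∀ i < n, ¬(i ∈ A ∧ i + 1 ∈ A)) ∧ ¬(n ∈ A ∧ 1 ∈ A)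

instance (n : ℕ) (A : Finset ℕ) : Decidable (IsStable n A) := by
  unfold IsStable; infer_instance

/-- The collection of stable `k`-element subsets of `{1,…,n}`. -/
def stableSets (n k : ℕ) : Finset (Finset ℕ) :=
  (Finset.Icc 1 n).powerset.filter fun A => A.card = k ∧ IsStable n A

/-!
Rotating the cycle `1 ↦ 2 ↦ ⋯ ↦ n ↦ 1` permutes the stable `k`-subsets, so every point lies in
equally many of them and we may take `x = n`. Deleting `n` from a stable set through it leaves a
`(k - 1)`-subset of the path `{2,…,n-2}` without two consecutive elements, and conversely. Such
subsets are counted by Pascal's rule, according to whether they contain the last point of the path.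
-/

section

open Finset

/-- The cyclic permutation `1 ↦ 2 ↦ ⋯ ↦ n ↦ 1`, extended by the identity to a permutation
of `ℕ`. Stability of a subset of `{1,…,n}` is expressed in terms of it. -/
def cyclicSucc (n : ℕ) : Equiv.Perm ℕ where
  toFun i := if 1 ≤ i ∧ i ≤ n then if i = n then 1 else i + 1 else i
  invFun i := if 1 ≤ i ∧ i ≤ n then if i = 1 then n else i - 1 else i
  left_inv i := by grind
  right_inv i := by grind

theorem cyclicSucc_apply (n i : ℕ) :
    cyclicSucc n i = if 1 ≤ i ∧ i ≤ n then if i = n then 1 else i + 1 else i :=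
  rfl

theorem cyclicSucc_mem_Icc_iff {n i : ℕ} : cyclicSucc n i ∈ Icc 1 n ↔ i ∈ Icc 1 n := by
  grind [cyclicSucc_apply]

theorem isStable_iff_cyclicSucc_notMem {n : ℕ} {A : Finset ℕ} (hA : A ⊆ Icc 1 n) :
    IsStable n A ↔ ∀ i ∈ A, cyclicSucc n i ∉ A := by
  grind [IsStable, cyclicSucc_apply]

theorem mem_stableSets_iff {n k : ℕ} {A : Finset ℕ} :
    A ∈ stableSets n k ↔ A ⊆ Icc 1 n ∧ #A = k ∧ IsStable n A := by
  rw [stableSets, mem_filter, mem_powerset]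

theorem map_cyclicSucc_mem_stableSets_iff {n k : ℕ} {A : Finset ℕ} :
    A.map (cyclicSucc n).toEmbedding ∈ stableSets n k ↔ A ∈ stableSets n k := by
  have map_subset : A.map (cyclicSucc n).toEmbedding ⊆ Icc 1 n ↔ A ⊆ Icc 1 n := by
    simp only [subset_iff, forall_mem_map, Equiv.coe_toEmbedding, cyclicSucc_mem_Icc_iff]
  simp only [mem_stableSets_iff, map_subset, card_map]
  refine and_congr_right fun hA => and_congr_right fun _ => ?_
  rw [isStable_iff_cyclicSucc_notMem hA, isStable_iff_cyclicSucc_notMem (map_subset.2 hA)]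
  simp only [forall_mem_map, ← Equiv.coe_toEmbedding (cyclicSucc n), mem_map']

theorem card_filter_apply_mem {α : Type*} [DecidableEq α] (σ : Equiv.Perm α)
    {𝒜 : Finset (Finset α)} (h𝒜 : ∀ A, A.map σ.toEmbedding ∈ 𝒜 ↔ A ∈ 𝒜) (x : α) :
    #{A ∈ 𝒜 | σ x ∈ A} = #{A ∈ 𝒜 | x ∈ A} := by
  refine (card_equiv σ.finsetCongr fun A => ?_).symm
  simp only [mem_filter, Equiv.finsetCongr_apply, h𝒜, mem_map_equiv, Equiv.symm_apply_apply]

theorem card_filter_mem_stableSets_eq_last {n x : ℕ} (k : ℕ) (hx : x ∈ Icc 1 n) :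
    #{A ∈ stableSets n k | x ∈ A} = #{A ∈ stableSets n k | n ∈ A} := by
  obtain ⟨hx1, hxn⟩ := mem_Icc.1 hx
  induction hxn using Nat.decreasingInduction with
  | self => rfl
  | of_succ i hi ih =>
    have succ_eq : cyclicSucc n i = i + 1 := by grind [cyclicSucc_apply]
    rw [← ih (by grind) (by grind), ← succ_eq,
      card_filter_apply_mem _ fun _ => map_cyclicSucc_mem_stableSets_iff]

theorem card_memberSubfamily_eq_card_filter {α : Type*} [DecidableEq α]
    (𝒜 : Finset (Finset α)) (a : α) : #(𝒜.memberSubfamily a) = #{A ∈ 𝒜 | a ∈ A} := by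
  refine card_image_of_injOn fun A hA B hB h => ?_
  rw [← insert_erase (mem_filter.1 hA).2, ← insert_erase (mem_filter.1 hB).2]
  exact congrArg (insert a) h

/-- The `k`-element subsets of the path `{a,…,a+m-1}` without two consecutive elements.
Those of `{2,…,n-2}` are the stable sets through `n` with `n` removed. -/
def sparseSets (a m k : ℕ) : Finset (Finset ℕ) :=
  {A ∈ (Ico a (a + m)).powersetCard k | ∀ i ∈ A, i + 1 ∉ A}

theorem mem_sparseSets_iff {a m k : ℕ} {A : Finset ℕ} :
    A ∈ sparseSets a m k ↔ (A ⊆ Ico a (a + m) ∧ #A = k) ∧ ∀ i ∈ A, i + 1 ∉ A := by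
  rw [sparseSets, mem_filter, mem_powersetCard]

-- For `m = 0` the truncated `m - 1` is harmless: the path left over is empty, as it is for `m = 1`.
theorem memberSubfamily_sparseSets (a m k : ℕ) :
    (sparseSets a (m + 1) (k + 1)).memberSubfamily (a + m) = sparseSets a (m - 1) k := by
  ext B
  simp only [mem_memberSubfamily, mem_sparseSets_iff, forall_mem_insert, subset_iff, mem_Ico]
  grind

theorem nonMemberSubfamily_sparseSets (a m k : ℕ) :
    (sparseSets a (m + 1) k).nonMemberSubfamily (a + m) = sparseSets a m k := by
  ext B
  simp only [mem_nonMemberSubfamily, mem_sparseSets_iff]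
  grind

theorem memberSubfamily_stableSets_last (n k : ℕ) :
    (stableSets (n + 2) (k + 1)).memberSubfamily (n + 2) = sparseSets 2 (n - 1) k := by
  ext B
  simp only [mem_memberSubfamily, mem_stableSets_iff, mem_sparseSets_iff]
  constructor
  · rintro ⟨⟨hsub, hcard, hsucc, hwrap⟩, hlast⟩
    have one_notMem : 1 ∉ B := fun h => hwrap ⟨mem_insert_self _ B, mem_insert_of_mem h⟩
    have pred_notMem : n + 1 ∉ B := fun h =>
      hsucc (n + 1) (Nat.lt_succ_self _) ⟨mem_insert_of_mem h, mem_insert_self _ B⟩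
    have subset_Ico : B ⊆ Ico 2 (2 + (n - 1)) := fun i hi => by
      have := hsub (mem_insert_of_mem hi)
      grind
    rw [card_insert_of_notMem hlast, Nat.add_right_cancel_iff] at hcard
    exact ⟨⟨subset_Ico, hcard⟩, fun i hi hi' =>
      hsucc i (by grind) ⟨mem_insert_of_mem hi, mem_insert_of_mem hi'⟩⟩
  · rintro ⟨⟨hsub, hcard⟩, hsucc⟩
    have hlast : n + 2 ∉ B := by grind
    refine ⟨⟨by grind, by rw [card_insert_of_notMem hlast, hcard], ?_, by grind⟩, hlast⟩
    grind

theorem card_sparseSets_succ_succ (a m k : ℕ) :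
    #(sparseSets a (m + 1) (k + 1)) = #(sparseSets a (m - 1) k) + #(sparseSets a m (k + 1)) := by
  rw [← card_memberSubfamily_add_card_nonMemberSubfamily (a + m), memberSubfamily_sparseSets,
    nonMemberSubfamily_sparseSets]

theorem card_sparseSets (a : ℕ) : ∀ m k : ℕ, #(sparseSets a m k) = (m + 1 - k).choose k
  | m, 0 => by simp [sparseSets, filter_singleton]
  | 0, k + 1 => by simp [sparseSets]
  | 1, k + 1 => by
    rw [card_sparseSets_succ_succ, card_sparseSets a 0 k, card_sparseSets a 0 (k + 1)]
    cases k <;> simp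
  | m + 2, k + 1 => by
    rw [card_sparseSets_succ_succ, Nat.add_sub_cancel, card_sparseSets a m k,
      card_sparseSets a (m + 1) (k + 1)]
    rcases le_or_gt k (m + 1) with hk | hk
    · rw [Nat.add_sub_add_right, Nat.add_sub_add_right, Nat.succ_sub hk, Nat.choose_succ_succ]
    · simp only [Nat.choose_eq_zero_of_lt, show m + 1 - k < k by omega,
        show m + 1 + 1 - (k + 1) < k + 1 by omega, show m + 2 + 1 - (k + 1) < k + 1 by omega]

end

theorem stmt1_general (n k : ℕ) (hk : 1 ≤ k) (hkn : k < n) (x : ℕ) (hx : x ∈ Finset.Icc 1 n) :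
    ((stableSets n k).filter fun A => x ∈ A).card = Nat.choose (n - k - 1) (k - 1) := by
  obtain ⟨k, rfl⟩ := Nat.exists_eq_add_of_le' hk
  obtain ⟨n, rfl⟩ := Nat.exists_eq_add_of_le' (show 2 ≤ n by omega)
  rw [card_filter_mem_stableSets_eq_last _ hx, ← card_memberSubfamily_eq_card_filter,
    memberSubfamily_stableSets_last, card_sparseSets, Nat.add_sub_cancel]
  rcases Nat.eq_zero_or_pos k with rfl | hk
  · simp only [Nat.choose_zero_right]
  · rw [show n - 1 + 1 - k = n + 2 - (k + 1) - 1 by omega]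

theorem stmt1 (n k : ℕ) (hk : 1 ≤ k) (hn : 2 * k ≤ n)
    (x : ℕ) (hx : x ∈ Finset.Icc 1 n) :
    ((stableSets n k).filter fun A => x ∈ A).card = Nat.choose (n - k - 1) (k - 1) :=
  stmt1_general n k hk (by omega) x hx
end

section
/- Let k ≥ 2, n ≥ 2k, and let 𝒞 be a family of stable k-element subsets of {1,…,n} that is pairwise intersecting (any two members of 𝒞 have a common element) and not star-shaped (there is no single element belonging to every member of 𝒞). Then |𝒞| ≤ k²·C(n+k−1, k−2). -/
section IntersectingFamilies

variable {α : Type*} [DecidableEq α]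

theorem card_filter_powersetCard_subset_le (S X : Finset α) (k : ℕ) :
    ((X.powersetCard k).filter (S ⊆ ·)).card ≤ (X.card - S.card).choose (k - S.card) := by
  by_cases h : S ⊆ X ∧ S.card ≤ k
  · exact (Finset.card_filter_powersetCard_subset S X k h.1 h.2).le
  · rw [Finset.filter_false_of_mem, Finset.card_empty]
    · exact Nat.zero_le _
    · intro B hB hSB
      obtain ⟨hBX, rfl⟩ := Finset.mem_powersetCard.1 hB
      exact h ⟨hSB.trans hBX, Finset.card_le_card hSB⟩

theorem card_le_card_mul_of_inter_nonempty {T : Finset α} {𝓕 : Finset (Finset α)} {d : ℕ}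
    (hT : ∀ B ∈ 𝓕, (T ∩ B).Nonempty) (hd : ∀ x ∈ T, (𝓕.filter (x ∈ ·)).card ≤ d) :
    𝓕.card ≤ T.card * d := by
  rw [← mul_one 𝓕.card]
  refine Finset.card_mul_le_card_mul (fun B x ↦ x ∈ B) (fun B hB ↦ ?_) hd
  rw [Finset.bipartiteAbove, Finset.filter_mem_eq_inter]
  exact (hT B hB).card_pos

theorem card_filter_mem_le_card_mul_of_codegree_le {C : Finset α} {𝓕 : Finset (Finset α)}
    {x : α} {d : ℕ} (hC : ∀ B ∈ 𝓕, (C ∩ B).Nonempty) (hxC : x ∉ C)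
    (hd : ∀ y, x ≠ y → (𝓕.filter ({x, y} ⊆ ·)).card ≤ d) :
    (𝓕.filter (x ∈ ·)).card ≤ C.card * d := by
  refine card_le_card_mul_of_inter_nonempty
    (fun B hB ↦ hC B (Finset.filter_subset _ _ hB)) fun y hy ↦ ?_
  have hxy : x ≠ y := fun h ↦ hxC (h ▸ hy)
  simpa only [Finset.filter_filter, Finset.insert_subset_iff,
    Finset.singleton_subset_iff] using hd y hxy

theorem card_le_sq_mul_of_codegree_le {𝓕 : Finset (Finset α)} {k d : ℕ}
    (hcard : ∀ A ∈ 𝓕, A.card ≤ k) (hint : ∀ A ∈ 𝓕, ∀ B ∈ 𝓕, (A ∩ B).Nonempty)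
    (hstar : ¬ ∃ x, ∀ A ∈ 𝓕, x ∈ A)
    (hd : ∀ x y, x ≠ y → (𝓕.filter ({x, y} ⊆ ·)).card ≤ d) :
    𝓕.card ≤ k ^ 2 * d := by
  -- Each member meets a fixed `A ∈ 𝓕` in some `x`, and a member of `𝓕` avoiding `x` in some `y`.
  obtain rfl | ⟨A, hA⟩ := 𝓕.eq_empty_or_nonempty
  · exact Nat.zero_le _
  have hdeg (x : α) : (𝓕.filter (x ∈ ·)).card ≤ k * d := by
    obtain ⟨C, hC, hxC⟩ : ∃ C ∈ 𝓕, x ∉ C := by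
      by_contra! h
      exact hstar ⟨x, h⟩
    exact (card_filter_mem_le_card_mul_of_codegree_le (hint C hC) hxC (hd x)).trans
      (Nat.mul_le_mul_right d (hcard C hC))
  calc 𝓕.card ≤ A.card * (k * d) :=
        card_le_card_mul_of_inter_nonempty (hint A hA) fun x _ ↦ hdeg x
    _ ≤ k * (k * d) := Nat.mul_le_mul_right _ (hcard A hA)
    _ = k ^ 2 * d := by ring

theorem stmt4_general {X : Finset α} {k : ℕ} {𝓕 : Finset (Finset α)}
    (hmem : 𝓕 ⊆ X.powersetCard k) (hint : ∀ A ∈ 𝓕, ∀ B ∈ 𝓕, (A ∩ B).Nonempty)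
    (hstar : ¬ ∃ x, ∀ A ∈ 𝓕, x ∈ A) :
    𝓕.card ≤ k ^ 2 * (X.card - 2).choose (k - 2) := by
  refine card_le_sq_mul_of_codegree_le
    (fun A hA ↦ (Finset.mem_powersetCard.1 (hmem hA)).2.le) hint hstar fun x y hxy ↦ ?_
  rw [← Finset.card_pair hxy]
  exact (Finset.card_le_card (Finset.filter_subset_filter _ hmem)).trans
    (card_filter_powersetCard_subset_le _ X k)

end IntersectingFamilies

theorem stableSets_subset_powersetCard (n k : ℕ) :
    stableSets n k ⊆ (Finset.Icc 1 n).powersetCard k := by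
  intro A hA
  obtain ⟨hAn, hAk, -⟩ := Finset.mem_filter.1 hA
  exact Finset.mem_powersetCard.2 ⟨Finset.mem_powerset.1 hAn, hAk⟩

theorem stmt4 (n k : ℕ) (hk : 2 ≤ k) (hn : 2 * k ≤ n)
    (𝒞 : Finset (Finset ℕ))
    (hmem : ∀ A ∈ 𝒞, A ∈ stableSets n k)
    (hint : ∀ A ∈ 𝒞, ∀ B ∈ 𝒞, (A ∩ B).Nonempty)
    (hstar : ¬ ∃ x, ∀ A ∈ 𝒞, x ∈ A) :
    𝒞.card ≤ k ^ 2 * Nat.choose (n + k - 1) (k - 2) := by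
  have hsub := fun A hA ↦ stableSets_subset_powersetCard n k (hmem A hA)
  exact (stmt4_general hsub hint hstar).trans <|
    Nat.mul_le_mul_left _ (Nat.choose_le_choose _ (by rw [Nat.card_Icc]; lia))
end

section
/- Let G be a finite simple graph on n vertices and let (C, H, R) be a partition of its vertex set with C nonempty and |C| = |H|, such that: (1) C is a clique in G; (2) every vertex of C is adjacent in G to every vertex of R; and (3) there is a bijection M : H → C such that for every h ∈ H, h and M(h) are not adjacent in G. Then for every integer t: χ(G) ≤ t if and only if |C| ≤ t and χ(G[R]) ≤ t − |C|. (This is the safety of the crown-decomposition reduction for dual coloring: taking t = n − k, G is (n−k)-colorable iff G[R], which has n − 2|H| vertices, is ((n−2|H|) − (k−|H|))-colorable.) -/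
/-!
For every crown decomposition of the complement, `χ(G) = |C| + χ(G[R])`. The lower bound holds
because no color can occur on both sides of a complete join, so `χ(G) ≥ χ(G[C]) + χ(G[R])`. For the
upper bound, giving each vertex of `H` the color of its partner under the matching colors
`G[C ∪ H]` with `|C|` colors, and `χ(G) ≤ χ(G[C ∪ H]) + χ(G[R])`.
-/

section ChromaticNumber

open SimpleGraph

variable {V α : Type*} {G : SimpleGraph V}

theorem chromaticNumber_le_enatCard_of_coloring (f : G.Coloring α) :
    G.chromaticNumber ≤ ENat.card α :=
  (chromaticNumber_mono_of_hom f).trans_eq chromaticNumber_top_eq_enat_card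

theorem chromaticNumber_induce_le_encard_image (f : G.Coloring α) (s : Set V) :
    (G.induce s).chromaticNumber ≤ (f '' s).encard :=
  chromaticNumber_le_enatCard_of_coloring <|
    Coloring.mk (s.imageFactorization f) fun hvw hf => f.valid hvw (congrArg Subtype.val hf)

theorem disjoint_image_coloring_of_forall_adj {s t : Set V}
    (hst : ∀ v ∈ s, ∀ w ∈ t, G.Adj v w) (f : G.Coloring α) : Disjoint (f '' s) (f '' t) := by
  rw [Set.disjoint_left]
  rintro _ ⟨v, hv, rfl⟩ ⟨w, hw, hwv⟩
  exact f.valid (hst v hv w hw) hwv.symm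

theorem chromaticNumber_induce_add_le_of_forall_adj {s t : Set V}
    (hst : ∀ v ∈ s, ∀ w ∈ t, G.Adj v w) :
    (G.induce s).chromaticNumber + (G.induce t).chromaticNumber ≤ G.chromaticNumber := by
  refine le_iInf₂ fun n ⟨f⟩ => ?_
  calc (G.induce s).chromaticNumber + (G.induce t).chromaticNumber
      ≤ (f '' s).encard + (f '' t).encard := by
        gcongr <;> exact chromaticNumber_induce_le_encard_image f _
    _ = (f '' s ∪ f '' t).encard :=
        (Set.encard_union_eq (disjoint_image_coloring_of_forall_adj hst f)).symm
    _ ≤ ENat.card (Fin n) := Set.encard_le_card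
    _ = n := by simp

theorem colorable_add_of_induce_of_union_eq_univ {s t : Set V} {m n : ℕ}
    (hst : s ∪ t = Set.univ) (hs : (G.induce s).Colorable m) (ht : (G.induce t).Colorable n) :
    G.Colorable (m + n) := by
  classical
  obtain ⟨f⟩ := hs
  obtain ⟨g⟩ := ht
  have mem_right {v : V} (hv : v ∉ s) : v ∈ t :=
    (hst.symm ▸ Set.mem_univ v : v ∈ s ∪ t).resolve_left hv
  let color (v : V) : Fin m ⊕ Fin n :=
    if hv : v ∈ s then .inl (f ⟨v, hv⟩) else .inr (g ⟨v, mem_right hv⟩)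
  have color_valid {v w : V} (hvw : G.Adj v w) : color v ≠ color w := by
    intro heq
    simp only [color] at heq
    split_ifs at heq
    · exact f.valid (by exact hvw) (Sum.inl.inj heq)
    · exact g.valid (by exact hvw) (Sum.inr.inj heq)
  simpa using (Coloring.mk color color_valid).colorable

theorem chromaticNumber_le_induce_add_induce_of_union_eq_univ {s t : Set V}
    (hst : s ∪ t = Set.univ) :
    G.chromaticNumber ≤ (G.induce s).chromaticNumber + (G.induce t).chromaticNumber := by
  by_cases hs : (G.induce s).chromaticNumber = ⊤
  · simp [hs]
  by_cases ht : (G.induce t).chromaticNumber = ⊤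
  · simp [ht]
  rw [← ENat.natCast_toNat hs, ← ENat.natCast_toNat ht]
  exact mod_cast (colorable_add_of_induce_of_union_eq_univ hst
    (colorable_of_chromaticNumber_ne_top hs)
    (colorable_of_chromaticNumber_ne_top ht)).chromaticNumber_le

theorem chromaticNumber_induce_of_isClique {s : Set V} (hs : G.IsClique s) :
    (G.induce s).chromaticNumber = s.encard := by
  rw [induce_eq_top.mpr hs, chromaticNumber_top_eq_enat_card, ENat.card_coe_set_eq]

theorem chromaticNumber_induce_union_le_encard {s t : Set V} {M : t → s}
    (hM : Function.Injective M) (hMnonadj : ∀ v : t, ¬ G.Adj v (M v)) :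
    (G.induce (s ∪ t)).chromaticNumber ≤ s.encard := by
  classical
  let color (v : ↥(s ∪ t)) : s := if hv : ↑v ∈ s then ⟨v, hv⟩ else M ⟨v, v.2.resolve_left hv⟩
  have color_valid {v w : ↥(s ∪ t)} (hvw : G.Adj v w) : color v ≠ color w := by
    intro heq
    simp only [color] at heq
    split_ifs at heq with hv hw hw
    · exact hvw.ne (Subtype.mk.inj heq)
    · exact hMnonadj ⟨w, w.2.resolve_left hw⟩ (congrArg Subtype.val heq ▸ hvw.symm)
    · exact hMnonadj ⟨v, v.2.resolve_left hv⟩ (congrArg Subtype.val heq ▸ hvw)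
    · exact hvw.ne (Subtype.mk.inj (hM heq))
  exact chromaticNumber_le_enatCard_of_coloring (Coloring.mk color color_valid)

end ChromaticNumber

theorem natCast_add_le_natCast_iff {m n : ℕ} {k : ℕ∞} :
    (m : ℕ∞) + k ≤ n ↔ m ≤ n ∧ k ≤ (n - m : ℕ) := by
  cases k with
  | top => simp
  | coe k =>
    norm_cast
    omega

theorem stmt8_general {V : Type*} (G : SimpleGraph V) (C H R : Set V)
    (hcover : C ∪ H ∪ R = Set.univ) (hclique : G.IsClique C)
    (hcomplete : ∀ c ∈ C, ∀ r ∈ R, G.Adj c r)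
    (M : H → C) (hM : Function.Injective M) (hMnonadj : ∀ h : H, ¬ G.Adj h (M h)) :
    G.chromaticNumber = C.encard + (G.induce R).chromaticNumber := by
  apply le_antisymm
  · calc G.chromaticNumber
        ≤ (G.induce (C ∪ H)).chromaticNumber + (G.induce R).chromaticNumber :=
          chromaticNumber_le_induce_add_induce_of_union_eq_univ hcover
      _ ≤ C.encard + (G.induce R).chromaticNumber := by
          gcongr
          exact chromaticNumber_induce_union_le_encard hM hMnonadj
  · rw [← chromaticNumber_induce_of_isClique hclique]
    exact chromaticNumber_induce_add_le_of_forall_adj hcomplete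

theorem stmt8 {V : Type*} [Fintype V] [DecidableEq V] (G : SimpleGraph V)
    (C H R : Finset V)
    (hcover : C ∪ H ∪ R = Finset.univ)
    (hCH : Disjoint C H) (hCR : Disjoint C R) (hHR : Disjoint H R)
    (hCne : C.Nonempty) (hcard : C.card = H.card)
    (hclique : G.IsClique (C : Set V))
    (hcomplete : ∀ c ∈ C, ∀ r ∈ R, G.Adj c r)
    (M : {x : V // x ∈ H} → {x : V // x ∈ C}) (hMbij : Function.Bijective M)
    (hMnonadj : ∀ h : {x : V // x ∈ H}, ¬ G.Adj (h : V) (M h : V)) :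
    ∀ t : ℕ,
      G.chromaticNumber ≤ (t : ℕ∞) ↔
        C.card ≤ t ∧ (G.induce (R : Set V)).chromaticNumber ≤ ((t - C.card : ℕ) : ℕ∞) := by
  have hcover' : (C ∪ H ∪ R : Set V) = Set.univ := by simp [← Finset.coe_union, hcover]
  rw [stmt8_general G C H R hcover' hclique hcomplete M hMbij.injective hMnonadj,
    Set.encard_coe_eq_coe_finsetCard]
  exact fun t => natCast_add_le_natCast_iff
end

section
/- Let G be a finite simple graph, k ≥ 1 an integer, and v a vertex of G of degree at least k+1. Then G has a vertex cover of size at most k if and only if G − v has a vertex cover of size at most k−1. -/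
/-!
A vertex outside a cover forces all its neighbours into the cover, so a vertex whose degree exceeds
the size of a cover lies in that cover. Covers of `G` containing `v` and covers of `G - v` turn into
each other by removing and adding `v`, which changes their size by exactly one.
-/

section VertexCover

variable {V : Type*} {G : SimpleGraph V} {v : V}

theorem neighborSet_subset_of_isVertexCover_of_notMem {c : Set V} (hc : G.IsVertexCover c)
    (hv : v ∉ c) : G.neighborSet v ⊆ c :=
  fun _ hvw ↦ (hc hvw).resolve_left hv

theorem mem_of_isVertexCover_of_encard_lt {c : Set V} (hc : G.IsVertexCover c)
    (hlt : c.encard < (G.neighborSet v).encard) : v ∈ c := by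
  by_contra hv
  exact hlt.not_ge (Set.encard_le_encard (neighborSet_subset_of_isVertexCover_of_notMem hc hv))

theorem isVertexCover_compl_union_image_of_induce {s : Set V} {c : Set s}
    (hc : (G.induce s).IsVertexCover c) : G.IsVertexCover (sᶜ ∪ (↑) '' c) := by
  intro u w huw
  by_cases hu : u ∈ s
  · by_cases hw : w ∈ s
    · have hcover : ⟨u, hu⟩ ∈ c ∨ ⟨w, hw⟩ ∈ c := hc (SimpleGraph.induce_adj.2 huw)
      exact hcover.imp (fun h ↦ .inr ⟨_, h, rfl⟩) (fun h ↦ .inr ⟨_, h, rfl⟩)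
    · exact .inr (.inl hw)
  · exact .inl (.inl hu)

theorem isVertexCover_induce_subtype {s : Set V} [DecidablePred (· ∈ s)] {S : Finset V}
    (hS : G.IsVertexCover S) : (G.induce s).IsVertexCover (S.subtype (· ∈ s) : Finset s) := by
  have hpreimage : (G.induce s).IsVertexCover ((↑) ⁻¹' (S : Set V)) :=
    hS.preimage (SimpleGraph.Embedding.induce s)
  exact hpreimage.subset fun _ hw ↦ Finset.mem_subtype.2 hw

theorem isVertexCover_insert_map_subtype [DecidableEq V] {S : Finset ({v}ᶜ : Set V)}
    (hS : (G.induce {v}ᶜ).IsVertexCover S) :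
    G.IsVertexCover (insert v (S.map (.subtype _)) : Finset V) := by
  rw [Finset.coe_insert, Finset.coe_map, Function.Embedding.coe_subtype, Set.insert_eq]
  simpa only [compl_compl] using isVertexCover_compl_union_image_of_induce hS

theorem stmt9_general (G : SimpleGraph V) {k : ℕ} (hk : 1 ≤ k) (v : V)
    (hdeg : k < (G.neighborSet v).encard) :
    (∃ S : Finset V, G.IsVertexCover S ∧ S.card ≤ k) ↔
      ∃ S : Finset ({v}ᶜ : Set V), (G.induce {v}ᶜ).IsVertexCover S ∧ S.card ≤ k - 1 := by
  classical
  constructor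
  · rintro ⟨S, hS, hcard⟩
    have hencard : (S : Set V).encard ≤ k := by simpa using hcard
    have hv : v ∈ S := mem_of_isVertexCover_of_encard_lt hS (hencard.trans_lt hdeg)
    refine ⟨S.subtype (· ∈ ({v}ᶜ : Set V)), isVertexCover_induce_subtype hS, ?_⟩
    calc (S.subtype (· ∈ ({v}ᶜ : Set V))).card
      _ = (S.erase v).card := by
        simp only [Finset.card_subtype, Set.mem_compl_singleton_iff, Finset.filter_ne']
      _ = S.card - 1 := Finset.card_erase_of_mem hv
      _ ≤ k - 1 := Nat.sub_le_sub_right hcard 1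
  · rintro ⟨S, hS, hcard⟩
    refine ⟨insert v (S.map (.subtype _)), isVertexCover_insert_map_subtype hS, ?_⟩
    calc (insert v (S.map (.subtype _))).card
      _ ≤ (S.map (.subtype _)).card + 1 := Finset.card_insert_le _ _
      _ = S.card + 1 := by rw [Finset.card_map]
      _ ≤ k := Nat.add_le_of_le_sub hk hcard

end VertexCover

theorem stmt9 {V : Type*} [Fintype V] [DecidableEq V] (G : SimpleGraph V)
    [DecidableRel G.Adj] (k : ℕ) (hk : 1 ≤ k)
    (v : V) (hdeg : k + 1 ≤ G.degree v) :
    (∃ S : Finset V, (∀ u w, G.Adj u w → u ∈ S ∨ w ∈ S) ∧ S.card ≤ k) ↔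
      (∃ S : Finset {w : V // w ≠ v},
        (∀ u w, (G.induce {w : V | w ≠ v}).Adj u w → u ∈ S ∨ w ∈ S) ∧ S.card ≤ k - 1) :=
  stmt9_general G hk v (by rw [Set.encard_eq_coe_toFinset_card]; exact_mod_cast hdeg)
end

section
/- Let G be a finite simple graph and u ≠ v two vertices with equal closed neighborhoods, N[u] = N[v] (in particular u and v are adjacent), and suppose u has a neighbor w ∉ {u, v}. Then for every integer k: G has an edge clique cover of size at most k if and only if G − v has an edge clique cover of size at most k. -/
/-- `G` has an edge clique cover consisting of (at most) `k` cliques: a family of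
`k` cliques such that every edge of `G` has both endpoints in some clique of the
family. -/
def HasEdgeCliqueCover {V : Type*} (G : SimpleGraph V) (k : ℕ) : Prop :=
  ∃ f : Fin k → Set V, (∀ i, G.IsClique (f i)) ∧
    ∀ u w, G.Adj u w → ∃ i, u ∈ f i ∧ w ∈ f i

/-!
True twins are interchangeable for adjacency up to equality, so sending every vertex to a twin in a
set `s` collapses `G` onto the subgraph induced by `s`, the fibers being cliques. Preimages of
cliques are then cliques. They cover every edge between two fibers, and an edge inside a fiber is
covered as soon as the image of the fiber lies in some clique of the cover, for which it suffices
that this image is not isolated. For twins `u` and `v` with `v` deleted, the common neighbor `w`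
ensures the latter.
-/

/-- The vertices `u` and `v` are true twins, that is, they have the same closed neighborhood;
every vertex is a true twin of itself. -/
def TrueTwins {V : Type*} (G : SimpleGraph V) (u v : V) : Prop :=
  ∀ x, (x = u ∨ G.Adj u x) ↔ (x = v ∨ G.Adj v x)

namespace TrueTwins

variable {V : Type*} {G : SimpleGraph V} {a a' b b' : V}

theorem refl (G : SimpleGraph V) (a : V) : TrueTwins G a a := fun _ => Iff.rfl

theorem symm (h : TrueTwins G a b) : TrueTwins G b a := fun x => (h x).symm

theorem eq_or_adj_congr (ha : TrueTwins G a a') (hb : TrueTwins G b b') :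
    a = b ∨ G.Adj a b ↔ a' = b' ∨ G.Adj a' b' :=
  calc
    a = b ∨ G.Adj a b ↔ a = b' ∨ G.Adj a b' := by simpa only [G.adj_comm] using hb a
    _ ↔ a' = b' ∨ G.Adj a' b' := by simpa only [eq_comm] using ha b'

theorem adj_of_adj (h : TrueTwins G a b) {x : V} (hx : G.Adj x a) (hxb : x ≠ b) : G.Adj x b :=
  ((eq_or_adj_congr (refl G x) h).1 (.inr hx)).resolve_left hxb

end TrueTwins

namespace HasEdgeCliqueCover

variable {V W : Type*} {G : SimpleGraph V} {H : SimpleGraph W} {k : ℕ}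

theorem comap (h : HasEdgeCliqueCover H k) (r : V → W)
    (hadj : ∀ a b, a ≠ b → (G.Adj a b ↔ r a = r b ∨ H.Adj (r a) (r b)))
    (hnbr : ∀ a b, G.Adj a b → ∃ c, H.Adj (r a) c) : HasEdgeCliqueCover G k := by
  obtain ⟨f, hclique, hcover⟩ := h
  refine ⟨fun i => r ⁻¹' f i, fun i a ha b hb hab => ?_, fun a b hab => ?_⟩
  · exact (hadj a b hab).2 <| or_iff_not_imp_left.2 <| hclique i ha hb
  · obtain heq | hrab := (hadj a b hab.ne).1 hab
    · obtain ⟨c, hc⟩ := hnbr a b hab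
      obtain ⟨i, hi, -⟩ := hcover (r a) c hc
      exact ⟨i, hi, show r b ∈ f i from heq ▸ hi⟩
    · exact hcover (r a) (r b) hrab

theorem comap_embedding (h : HasEdgeCliqueCover H k) (φ : G ↪g H) : HasEdgeCliqueCover G k :=
  h.comap φ
    (fun a b hab => by simp only [φ.injective.eq_iff, hab, φ.map_adj_iff, false_or])
    (fun _ b hab => ⟨φ b, φ.map_adj_iff.2 hab⟩)

theorem iff_induce_of_trueTwins {s : Set V} (htwin : ∀ x, ∃ y ∈ s, TrueTwins G x y)
    (hnbr : ∀ x ∈ s, ∀ y, G.Adj x y → ∃ z ∈ s, G.Adj x z) :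
    HasEdgeCliqueCover G k ↔ HasEdgeCliqueCover (G.induce s) k := by
  refine ⟨fun h => h.comap_embedding (SimpleGraph.Embedding.induce s), fun h => ?_⟩
  choose r hrs hr using htwin
  refine h.comap (fun x => ⟨r x, hrs x⟩) (fun a b hab => ?_) (fun a b hab => ?_)
  · simpa only [hab, false_or, Subtype.mk.injEq, SimpleGraph.induce_adj]
      using (hr a).eq_or_adj_congr (hr b)
  · obtain ⟨y, hy⟩ : ∃ y, G.Adj (r a) y := by
      by_cases hb : r a = b
      · exact ⟨a, hb ▸ hab.symm⟩
      · exact ⟨b, ((hr a).adj_of_adj hab.symm (Ne.symm hb)).symm⟩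
    obtain ⟨z, hz, hadj⟩ := hnbr (r a) (hrs a) y hy
    exact ⟨⟨z, hz⟩, hadj⟩

end HasEdgeCliqueCover

theorem stmt11_general {V : Type*} {G : SimpleGraph V} {u v w : V} (huv : u ≠ v)
    (htwin : TrueTwins G u v) (hwv : w ≠ v) (hadj : G.Adj u w) (k : ℕ) :
    HasEdgeCliqueCover G k ↔ HasEdgeCliqueCover (G.induce {x : V | x ≠ v}) k := by
  refine HasEdgeCliqueCover.iff_induce_of_trueTwins (fun x => ?_) (fun x hx y hxy => ?_)
  · obtain rfl | hxv := eq_or_ne x v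
    · exact ⟨u, huv, htwin.symm⟩
    · exact ⟨x, hxv, .refl G x⟩
  · obtain rfl | hyv := eq_or_ne y v
    · obtain rfl | hxu := eq_or_ne x u
      · exact ⟨w, hwv, hadj⟩
      · exact ⟨u, huv, htwin.symm.adj_of_adj hxy hxu⟩
    · exact ⟨y, hyv, hxy⟩

theorem stmt11 {V : Type*} [Fintype V] [DecidableEq V] (G : SimpleGraph V)
    (u v : V) (huv : u ≠ v)
    (hN : ∀ x, (x = u ∨ G.Adj u x) ↔ (x = v ∨ G.Adj v x))
    (w : V) (hwu : w ≠ u) (hwv : w ≠ v) (hadj : G.Adj u w) :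
    ∀ k : ℕ, HasEdgeCliqueCover G k ↔ HasEdgeCliqueCover (G.induce {x : V | x ≠ v}) k :=
  stmt11_general huv hN hwv hadj
end

section
/- Let G be a finite simple graph on n vertices that has an edge clique cover consisting of k cliques. Then there exists a set S of vertices with |S| ≥ n/2^k such that either every vertex of S is isolated, or S is a clique in G and all vertices u, v ∈ S have equal closed neighborhoods N[u] = N[v]. -/
/-!
Sort the vertices by which of the `k` cliques contain them. There are at most `2 ^ k` classes, so
some class has at least `n / 2 ^ k` vertices. Vertices in no clique are isolated, and the closed
neighborhood of any other vertex is the union of the cliques containing it, so the vertices of one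
class are either all isolated or pairwise adjacent with a common closed neighborhood.
-/

theorem exists_card_le_card_fiber_mul_card {α β : Type*} [Fintype α] [Fintype β] [Nonempty β]
    [DecidableEq β] (f : α → β) :
    ∃ b, Fintype.card α ≤ (Finset.univ.filter fun a => f a = b).card * Fintype.card β := by
  obtain ⟨b, -, hmax⟩ := Finset.univ.exists_max_image
    (fun b => (Finset.univ.filter fun a => f a = b).card) Finset.univ_nonempty
  exact ⟨b, Finset.card_le_mul_card_image_of_maps_to (fun a _ => Finset.mem_univ (f a)) _ hmax⟩

/-- The trace of a vertex `v` on a family `f` of vertex sets: the indices of the members of `f`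
containing `v`. Vertices are classified by their trace on an edge clique cover. -/
def coverTrace {V ι : Type*} (f : ι → Set V) (v : V) : Set ι :=
  {i | v ∈ f i}

theorem mem_coverTrace {V ι : Type*} {f : ι → Set V} {v : V} {i : ι} :
    i ∈ coverTrace f v ↔ v ∈ f i :=
  Iff.rfl

/-- The family `f` of vertex sets is an edge clique cover of `G`. Unlike in `HasEdgeCliqueCover`,
the family is explicit and its index type arbitrary. -/
structure IsEdgeCliqueCover {V ι : Type*} (G : SimpleGraph V) (f : ι → Set V) : Prop where
  isClique (i : ι) : G.IsClique (f i)
  exists_mem_of_adj {u v : V} : G.Adj u v → ∃ i, u ∈ f i ∧ v ∈ f i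

namespace IsEdgeCliqueCover

variable {V ι : Type*} {G : SimpleGraph V} {f : ι → Set V} {v : V}

theorem not_adj_of_coverTrace_eq_empty (hf : IsEdgeCliqueCover G f) (hv : coverTrace f v = ∅)
    (x : V) : ¬ G.Adj v x := by
  intro hvx
  obtain ⟨i, hvi, -⟩ := hf.exists_mem_of_adj hvx
  exact Set.eq_empty_iff_forall_notMem.1 hv i hvi

theorem isClique_setOf_coverTrace_eq (hf : IsEdgeCliqueCover G f) {T : Set ι} (hT : T.Nonempty) :
    G.IsClique {v | coverTrace f v = T} := by
  obtain ⟨i, hi⟩ := hT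
  refine (hf.isClique i).subset fun v (hv : coverTrace f v = T) => ?_
  rwa [← mem_coverTrace, hv]

theorem insert_neighborSet_eq_biUnion (hf : IsEdgeCliqueCover G f)
    (hv : (coverTrace f v).Nonempty) :
    insert v (G.neighborSet v) = ⋃ i ∈ coverTrace f v, f i := by
  apply Set.Subset.antisymm
  · refine Set.insert_subset ?_ fun x hvx => ?_
    · obtain ⟨i, hi⟩ := hv
      exact Set.mem_biUnion hi hi
    · obtain ⟨i, hvi, hxi⟩ := hf.exists_mem_of_adj hvx
      exact Set.mem_biUnion hvi hxi
  · refine Set.iUnion₂_subset fun i hvi x hxi => ?_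
    exact or_iff_not_imp_left.2 fun hxv => hf.isClique i hvi hxi (Ne.symm hxv)

end IsEdgeCliqueCover

theorem stmt12 {V : Type*} [Fintype V] [DecidableEq V] (G : SimpleGraph V) (k : ℕ)
    (hcover : HasEdgeCliqueCover G k) :
    ∃ S : Finset V, Fintype.card V ≤ S.card * 2 ^ k ∧
      ((∀ v ∈ S, ∀ x, ¬ G.Adj v x) ∨
        (G.IsClique (S : Set V) ∧
          ∀ u ∈ S, ∀ v ∈ S, ∀ x, ((x = u ∨ G.Adj u x) ↔ (x = v ∨ G.Adj v x)))) := by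
  classical
  obtain ⟨f, hclique, hadj⟩ := hcover
  have hf : IsEdgeCliqueCover G f := ⟨hclique, hadj _ _⟩
  obtain ⟨T, hcard⟩ := exists_card_le_card_fiber_mul_card (coverTrace f)
  rw [Fintype.card_set, Fintype.card_fin] at hcard
  refine ⟨_, hcard, ?_⟩
  simp only [Finset.coe_filter, Finset.mem_filter_univ, Finset.mem_univ, true_and]
  rcases T.eq_empty_or_nonempty with rfl | hT
  · exact Or.inl fun v hv => hf.not_adj_of_coverTrace_eq_empty hv
  · have closedNeighborhood_eq {v : V} (hv : coverTrace f v = T) :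
        insert v (G.neighborSet v) = ⋃ i ∈ T, f i := by
      subst hv
      exact hf.insert_neighborSet_eq_biUnion hT
    refine Or.inr ⟨hf.isClique_setOf_coverTrace_eq hT, fun u hu v hv => Set.ext_iff.1 ?_⟩
    exact (closedNeighborhood_eq hu).trans (closedNeighborhood_eq hv).symm
end

section
/- Let U be a set, 𝒜 a family of subsets of U, k ≥ 0 an integer, and let S_1, …, S_{k+1} ∈ 𝒜 be k+1 pairwise distinct sets forming a sunflower with core Y, i.e., S_i ∩ S_j = Y for all i ≠ j. Then for every finite set H ⊆ U with |H| ≤ k: H intersects every member of 𝒜 if and only if H intersects every member of (𝒜 ∖ {S_1,…,S_{k+1}}) ∪ {Y}. In particular, 𝒜 has a hitting set of size at most k if and only if (𝒜 ∖ {S_1,…,S_{k+1}}) ∪ {Y} does. -/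
/-!
Two petals of a sunflower meet only in the core, so if `H` meets every petal but misses the core,
points of `H` chosen in different petals are different, and `H` has at least as many points as
there are petals. Conversely, if `H` meets the core and there are more petals than points of `H`,
then there are at least two petals, and so each of them contains the core.
-/

section HittingSet

variable {U ι : Type*} {H : Set U}

/-- `H` is a hitting set for the family `𝒜`, that is, it intersects every member of `𝒜`. -/
def IsHittingSet (H : Set U) (𝒜 : Set (Set U)) : Prop :=
  ∀ A ∈ 𝒜, (H ∩ A).Nonempty

theorem isHittingSet_union {𝒜 ℬ : Set (Set U)} :
    IsHittingSet H (𝒜 ∪ ℬ) ↔ IsHittingSet H 𝒜 ∧ IsHittingSet H ℬ :=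
  forall₂_or_left

theorem isHittingSet_singleton {A : Set U} : IsHittingSet H {A} ↔ (H ∩ A).Nonempty :=
  forall_eq

theorem isHittingSet_range {S : ι → Set U} :
    IsHittingSet H (Set.range S) ↔ ∀ i, (H ∩ S i).Nonempty :=
  Set.forall_mem_range

end HittingSet

/-- The family `S` of petals is a sunflower with core `Y`. The family is indexed by an arbitrary
type and only petals with different indices are compared, so a set may occur as a petal more than
once if it equals the core. -/
def IsSunflower {U ι : Type*} (S : ι → Set U) (Y : Set U) : Prop :=
  Pairwise fun i j => S i ∩ S j = Y

namespace IsSunflower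

variable {U ι : Type*} {S : ι → Set U} {Y H : Set U}

theorem core_subset_petal [Nontrivial ι] (hS : IsSunflower S Y) (i : ι) : Y ⊆ S i := by
  obtain ⟨j, hji⟩ := exists_ne i
  exact hS hji.symm ▸ Set.inter_subset_left

theorem inter_core_nonempty (hS : IsSunflower S Y) (hH : IsEmpty (ι ↪ H))
    (hit : ∀ i, (H ∩ S i).Nonempty) : (H ∩ Y).Nonempty := by
  choose x hxH hxS using hit
  have not_injective : ¬ Function.Injective fun i => (⟨x i, hxH i⟩ : H) :=
    fun hinj => hH.false ⟨_, hinj⟩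
  obtain ⟨i, j, hxij, hij⟩ := Function.not_injective_iff.1 not_injective
  have hxj : x i ∈ S j := by
    rw [show x i = x j from congrArg Subtype.val hxij]
    exact hxS j
  exact ⟨x i, hxH i, hS hij ▸ ⟨hxS i, hxj⟩⟩

theorem inter_petal_nonempty (hS : IsSunflower S Y) (hH : IsEmpty (ι ↪ H))
    (hit : (H ∩ Y).Nonempty) (i : ι) : (H ∩ S i).Nonempty := by
  have : Nontrivial ι := by
    by_contra! hι
    exact hH.false ⟨fun _ => ⟨hit.some, hit.some_mem.1⟩, Function.injective_of_subsingleton _⟩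
  exact hit.mono (Set.inter_subset_inter_right H (hS.core_subset_petal i))

theorem isHittingSet_range_iff (hS : IsSunflower S Y) (hH : IsEmpty (ι ↪ H)) :
    IsHittingSet H (Set.range S) ↔ IsHittingSet H {Y} := by
  rw [isHittingSet_range, isHittingSet_singleton]
  exact ⟨hS.inter_core_nonempty hH, hS.inter_petal_nonempty hH⟩

end IsSunflower

theorem stmt13_general {U ι : Type*} {𝒜 : Set (Set U)} {S : ι → Set U} {Y H : Set U}
    (hmem : ∀ i, S i ∈ 𝒜) (hS : IsSunflower S Y) (hH : IsEmpty (ι ↪ H)) :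
    IsHittingSet H 𝒜 ↔ IsHittingSet H ((𝒜 \ Set.range S) ∪ {Y}) :=
  calc IsHittingSet H 𝒜
    _ ↔ IsHittingSet H ((𝒜 \ Set.range S) ∪ Set.range S) := by
      rw [Set.sdiff_union_of_subset (Set.range_subset_iff.2 hmem)]
    _ ↔ IsHittingSet H ((𝒜 \ Set.range S) ∪ {Y}) := by
      rw [isHittingSet_union, hS.isHittingSet_range_iff hH, isHittingSet_union]

theorem stmt13 {U : Type*} (𝒜 : Set (Set U)) (k : ℕ) (Y : Set U)
    (S : Fin (k + 1) → Set U)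
    (hmem : ∀ i, S i ∈ 𝒜)
    (hdist : Function.Injective S)
    (hcore : ∀ i j, i ≠ j → S i ∩ S j = Y) :
    (∀ H : Finset U, H.card ≤ k →
      ((∀ A ∈ 𝒜, ((H : Set U) ∩ A).Nonempty) ↔
        (∀ A ∈ (𝒜 \ Set.range S) ∪ {Y}, ((H : Set U) ∩ A).Nonempty))) ∧
    ((∃ H : Finset U, H.card ≤ k ∧ ∀ A ∈ 𝒜, ((H : Set U) ∩ A).Nonempty) ↔
      (∃ H : Finset U, H.card ≤ k ∧
        ∀ A ∈ (𝒜 \ Set.range S) ∪ {Y}, ((H : Set U) ∩ A).Nonempty)) := by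
  have hitting_iff (H : Finset U) (hH : H.card ≤ k) :=
    stmt13_general (H := (H : Set U)) hmem hcore
      (Function.Embedding.isEmpty_of_card_lt (by simpa using Nat.lt_succ_of_le hH))
  exact ⟨hitting_iff, exists_congr fun H => and_congr_right (hitting_iff H)⟩
end

section
/- Let m, n ≥ 1 and let W be a social welfare function for n agents over the alternatives [m] that is unanimous and satisfies IIA. Then for every B ⊆ [m] with B ≠ [m], the social welfare function W_{−B} over the alternatives [m]∖B is unanimous and satisfies IIA. -/
/-- A preference over `α`: a strict linear order, given as a relation that is
trichotomous, irreflexive and transitive. `σ.1 a b` means `a` is preferred to `b`. -/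
def Pref (α : Type*) : Type _ :=
  {r : α → α → Prop //
    (∀ a b, r a b ∨ a = b ∨ r b a) ∧ (∀ a, ¬ r a a) ∧ (∀ a b c, r a b → r b c → r a c)}

/-- Restriction `σ_{−B}` of a preference on `Fin m` to the alternatives outside `B`. -/
def restrictPref {m : ℕ} (B : Finset (Fin m)) (σ : Pref (Fin m)) :
    Pref {x : Fin m // x ∉ B} :=
  ⟨fun a b => σ.1 a.1 b.1, by
    obtain ⟨h1, h2, h3⟩ := σ.2
    refine ⟨fun a b => ?_, fun a => h2 a.1, fun a b c => h3 a.1 b.1 c.1⟩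
    rcases h1 a.1 b.1 with h | h | h
    · exact Or.inl h
    · exact Or.inr (Or.inl (Subtype.ext h))
    · exact Or.inr (Or.inr h)⟩

/-- Extension `π^{+B}` of a preference `π` on `[m] ∖ B` to all of `Fin m`: it agrees
with `π` outside `B`, places every alternative outside `B` before every alternative
in `B`, and orders `B` by the natural order on `Fin m`. -/
def extendPref {m : ℕ} (B : Finset (Fin m)) (π : Pref {x : Fin m // x ∉ B}) :
    Pref (Fin m) :=
  ⟨fun a b =>
    if ha : a ∈ B then b ∈ B ∧ a < b
    else if hb : b ∈ B then True
    else π.1 ⟨a, ha⟩ ⟨b, hb⟩, by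
    obtain ⟨h1, h2, h3⟩ := π.2
    refine ⟨fun a b => ?_, fun a => ?_, fun a b c => ?_⟩
    · by_cases ha : a ∈ B <;> by_cases hb : b ∈ B <;> simp [ha, hb]
      · rcases lt_trichotomy a b with h | h | h
        · exact Or.inl h
        · exact Or.inr (Or.inl h)
        · exact Or.inr (Or.inr h)
      · rcases h1 ⟨a, ha⟩ ⟨b, hb⟩ with h | h | h
        · exact Or.inl h
        · exact Or.inr (Or.inl (congrArg Subtype.val h))
        · exact Or.inr (Or.inr h)
    · by_cases ha : a ∈ B <;> simp [ha, h2]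
    · by_cases ha : a ∈ B <;> by_cases hb : b ∈ B <;> by_cases hc : c ∈ B <;>
        simp [ha, hb, hc]
      · exact fun hab hbc => lt_trans hab hbc
      · exact fun hab hbc => h3 _ _ _ hab hbc⟩

/-- `a` is preferred to `b` by every agent implies `a` is preferred to `b` in the
aggregate ranking. -/
def Unanimous {n : ℕ} {α : Type*} (W : (Fin n → Pref α) → Pref α) : Prop :=
  ∀ (R : Fin n → Pref α) (a b : α), (∀ i, (R i).1 a b) → (W R).1 a b

/-- Independence of irrelevant alternatives. -/
def IIA {n : ℕ} {α : Type*} (W : (Fin n → Pref α) → Pref α) : Prop :=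
  ∀ (R R' : Fin n → Pref α) (a b : α),
    (∀ i, (R i).1 a b ↔ (R' i).1 a b) → ((W R).1 a b ↔ (W R').1 a b)

/-- Some agent's preference is always reproduced verbatim by `W`. -/
def Dictatorial {n : ℕ} {α : Type*} (W : (Fin n → Pref α) → Pref α) : Prop :=
  ∃ i : Fin n, ∀ R : Fin n → Pref α, W R = R i

/-- The social welfare function `W_{−B}` over the alternatives `[m] ∖ B`:
`W_{−B}(R₁,…,Rₙ) = W(R₁^{+B},…,Rₙ^{+B})_{−B}`. -/
def Wminus {m n : ℕ} (B : Finset (Fin m))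
    (W : (Fin n → Pref (Fin m)) → Pref (Fin m))
    (R : Fin n → Pref {x : Fin m // x ∉ B}) : Pref {x : Fin m // x ∉ B} :=
  restrictPref B (W fun i => extendPref B (R i))

/-- The pullback of a preference along an injection `f`: `a` is preferred to `b` when `f a` is
preferred to `f b`. For `f` the inclusion of `[m] ∖ B` into `[m]` this is the
restriction `σ_{−B}`. -/
def Pref.comap {α β : Type*} (f : β ↪ α) (σ : Pref α) : Pref β :=
  ⟨fun a b => σ.1 (f a) (f b),
    fun a b => (σ.2.1 (f a) (f b)).imp_right (Or.imp_left fun h => f.injective h),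
    fun a => σ.2.2.1 (f a),
    fun a b c => σ.2.2.2 (f a) (f b) (f c)⟩

theorem Pref.comap_apply {α β : Type*} (f : β ↪ α) (σ : Pref α) (a b : β) :
    (σ.comap f).1 a b ↔ σ.1 (f a) (f b) :=
  Iff.rfl

theorem extendPref_coe_coe {m : ℕ} (B : Finset (Fin m)) (π : Pref {x : Fin m // x ∉ B})
    (a b : {x : Fin m // x ∉ B}) : (extendPref B π).1 a b ↔ π.1 a b := by
  simp [extendPref, a.2, b.2]

theorem comap_extendPref {m : ℕ} (B : Finset (Fin m)) (π : Pref {x : Fin m // x ∉ B}) :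
    (extendPref B π).comap (Function.Embedding.subtype (· ∉ B)) = π :=
  Subtype.ext <| funext₂ fun a b => propext <| extendPref_coe_coe B π a b

section Comap

-- `s R` may be any profile extending `R` along `f`: how it ranks the alternatives outside the
-- range of `f` is immaterial, because unanimity and IIA only compare two alternatives at a time.
variable {n : ℕ} {α β : Type*} {W : (Fin n → Pref α) → Pref α} {f : β ↪ α}
  {s : (Fin n → Pref β) → Fin n → Pref α}

theorem Unanimous.comap (hW : Unanimous W) (hs : ∀ R i, (s R i).comap f = R i) :
    Unanimous fun R => (W (s R)).comap f := by
  intro R a b hab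
  refine hW (s R) (f a) (f b) fun i => ?_
  rw [← Pref.comap_apply, hs]
  exact hab i

theorem IIA.comap (hW : IIA W) (hs : ∀ R i, (s R i).comap f = R i) :
    IIA fun R => (W (s R)).comap f := by
  intro R R' a b hab
  refine hW (s R) (s R') (f a) (f b) fun i => ?_
  rw [← Pref.comap_apply, ← Pref.comap_apply, hs, hs]
  exact hab i

end Comap

theorem Wminus_eq_comap {m n : ℕ} (B : Finset (Fin m))
    (W : (Fin n → Pref (Fin m)) → Pref (Fin m)) :
    Wminus B W = fun R =>
      (W fun i => extendPref B (R i)).comap (Function.Embedding.subtype (· ∉ B)) :=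
  rfl

theorem stmt14 (m n : ℕ) (hm : 1 ≤ m) (hn : 1 ≤ n)
    (W : (Fin n → Pref (Fin m)) → Pref (Fin m))
    (hU : Unanimous W) (hIIA : IIA W)
    (B : Finset (Fin m)) (hB : B ≠ Finset.univ) :
    Unanimous (Wminus B W) ∧ IIA (Wminus B W) := by
  rw [Wminus_eq_comap]
  exact ⟨hU.comap fun R i => comap_extendPref B (R i),
    hIIA.comap fun R i => comap_extendPref B (R i)⟩
end

section
/- Let m, n ≥ 1 and let W be a social choice function for n agents over the alternatives [m] that is onto and strategyproof. Then for every B ⊊ [m] and every profile R = (R_1,…,R_n) of preferences over [m]∖B, the value W(R_1^{+B},…,R_n^{+B}) does not belong to B. -/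
/-- Strategyproofness: no agent `i` can, by misreporting its preference as `π`,
obtain an outcome it strictly prefers (under its true preference `R i`). -/
def SCFStrategyproof {n : ℕ} {α : Type*} [DecidableEq (Fin n)]
    (W : (Fin n → Pref α) → α) : Prop :=
  ∀ (R : Fin n → Pref α) (i : Fin n) (π : Pref α),
    ¬ (R i).1 (W (Function.update R i π)) (W R)

/-- `a` is the most preferred element of the preference `σ`. -/
def PrefTop {α : Type*} (σ : Pref α) (a : α) : Prop := ∀ b, b ≠ a → σ.1 a b

/-- Some agent's top alternative is always the outcome of `W`. -/
def SCFDictatorial {n : ℕ} {α : Type*} (W : (Fin n → Pref α) → α) : Prop :=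
  ∃ i : Fin n, ∀ R : Fin n → Pref α, PrefTop (R i) (W R)

/-!
Raise an attainable alternative `a` to the top of every preference of a profile `R`. By Maskin
monotonicity the outcome is then `a`, because every agent ranks it first. If no agent preferred
`W R` to `a` in the first place, raising `a` leaves everything that was below `W R` below it, so the
outcome is also still `W R`. Hence some agent prefers `W R` to any other attainable alternative,
which excludes outcomes in a set `B` that all agents rank below the rest.
-/

namespace Pref

variable {α : Type*}

protected theorem trichotomous (σ : Pref α) (a b : α) : σ.1 a b ∨ a = b ∨ σ.1 b a :=
  σ.2.1 a b

protected theorem trans (σ : Pref α) {a b c : α} (hab : σ.1 a b) (hbc : σ.1 b c) : σ.1 a c :=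
  σ.2.2.2 a b c hab hbc

protected theorem ne (σ : Pref α) {a b : α} (h : σ.1 a b) : a ≠ b := by
  rintro rfl
  exact σ.2.2.1 a h

protected theorem asymm (σ : Pref α) {a b : α} (hab : σ.1 a b) : ¬ σ.1 b a :=
  fun hba => σ.ne (σ.trans hab hba) rfl

/-- The preference obtained from `σ` by raising `a` to the top and keeping the order of the other
alternatives. -/
def raiseToTop (a : α) (σ : Pref α) : Pref α :=
  ⟨fun x y => y ≠ a ∧ (x = a ∨ σ.1 x y), by
    refine ⟨fun x y => ?_, fun x => ?_, fun x y z => ?_⟩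
    · have := σ.trichotomous x y
      grind
    · rintro ⟨hx, rfl | h⟩
      · exact hx rfl
      · exact σ.ne h rfl
    · rintro ⟨hy, hxy⟩ ⟨hz, hyz⟩
      exact ⟨hz, hxy.imp_right fun h => σ.trans h (hyz.resolve_left hy)⟩⟩

theorem prefTop_raiseToTop (a : α) (σ : Pref α) : PrefTop (σ.raiseToTop a) a :=
  fun _ hb => ⟨hb, Or.inl rfl⟩

theorem raiseToTop_of_ne {a b c : α} {σ : Pref α} (hc : c ≠ a) (h : σ.1 b c) :
    (σ.raiseToTop a).1 b c :=
  ⟨hc, Or.inr h⟩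

end Pref

theorem extendPref_of_notMem_of_mem {m : ℕ} {B : Finset (Fin m)} (π : Pref {x : Fin m // x ∉ B})
    {a b : Fin m} (ha : a ∉ B) (hb : b ∈ B) : (extendPref B π).1 a b := by
  simp [extendPref, ha, hb]

/-- Maskin monotonicity of a social choice function, for an arbitrary type `ι` of agents: the
outcome survives any change of profile under which no agent moves an alternative from below the
outcome to above it. -/
def SCFMaskinMonotone {ι α : Type*} (W : (ι → Pref α) → α) : Prop :=
  ∀ ⦃R R' : ι → Pref α⦄, (∀ i c, (R i).1 (W R) c → (R' i).1 (W R) c) → W R' = W R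

namespace SCFStrategyproof

variable {n : ℕ} {α : Type*} {W : (Fin n → Pref α) → α}

theorem update_eq (hsp : SCFStrategyproof W) (R : Fin n → Pref α) (i : Fin n) (π : Pref α)
    (h : ∀ c, (R i).1 (W R) c → π.1 (W R) c) : W (Function.update R i π) = W R := by
  rcases (R i).trichotomous (W (Function.update R i π)) (W R) with hlt | heq | hgt
  · exact absurd hlt (hsp R i π)
  · exact heq
  · -- An agent whose true preference is `π` would gain by reporting `R i`.
    have hback := hsp (Function.update R i π) i (R i)
    rw [Function.update_idem, Function.update_eq_self, Function.update_self] at hback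
    exact absurd (h _ hgt) hback

theorem maskinMonotone (hsp : SCFStrategyproof W) : SCFMaskinMonotone W := by
  intro R R' h
  suffices hs : ∀ s : Finset (Fin n), W (s.piecewise R' R) = W R by
    simpa only [Finset.piecewise_univ] using hs Finset.univ
  intro s
  induction s using Finset.induction_on with
  | empty => rw [Finset.piecewise_empty]
  | insert i s hi ih =>
    rw [Finset.piecewise_insert, hsp.update_eq, ih]
    rw [ih, Finset.piecewise_eq_of_notMem _ _ _ hi]
    exact h i

end SCFStrategyproof

namespace SCFMaskinMonotone

variable {ι α : Type*} {W : (ι → Pref α) → α} {R : ι → Pref α} {a : α}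

theorem eq_of_forall_prefTop (hW : SCFMaskinMonotone W) (ha : a ∈ Set.range W)
    (hR : ∀ i, PrefTop (R i) a) : W R = a := by
  obtain ⟨R₀, rfl⟩ := ha
  exact hW fun i c hc => hR i c ((R₀ i).ne hc).symm

theorem exists_outcome_preferred (hW : SCFMaskinMonotone W) (ha : a ∈ Set.range W)
    (hne : W R ≠ a) : ∃ i, (R i).1 (W R) a := by
  by_contra! hR
  have htop : W (fun i => (R i).raiseToTop a) = a :=
    hW.eq_of_forall_prefTop ha fun i => (R i).prefTop_raiseToTop a
  have hkeep : W (fun i => (R i).raiseToTop a) = W R :=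
    hW fun i c hc => Pref.raiseToTop_of_ne (fun hca => hR i (hca ▸ hc)) hc
  exact hne (hkeep.symm.trans htop)

end SCFMaskinMonotone

theorem stmt16_general {ι α : Type*} {W : (ι → Pref α) → α} (hW : SCFMaskinMonotone W)
    {B : Set α} (hB : ∃ R₀, W R₀ ∉ B) {R : ι → Pref α}
    (hR : ∀ i, ∀ a ∉ B, ∀ b ∈ B, (R i).1 a b) : W R ∉ B := by
  intro hmem
  obtain ⟨R₀, hR₀⟩ := hB
  obtain ⟨i, hi⟩ := hW.exists_outcome_preferred ⟨R₀, rfl⟩ (ne_of_mem_of_not_mem hmem hR₀)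
  exact (R i).asymm hi (hR i _ hR₀ _ hmem)

theorem stmt16 (m n : ℕ) (hm : 1 ≤ m) (hn : 1 ≤ n)
    (W : (Fin n → Pref (Fin m)) → Fin m)
    (honto : Function.Surjective W) (hsp : SCFStrategyproof W)
    (B : Finset (Fin m)) (hB : B ⊂ Finset.univ) :
    ∀ R : Fin n → Pref {x : Fin m // x ∉ B},
      W (fun i => extendPref B (R i)) ∉ B := by
  intro R
  obtain ⟨a, -, haB⟩ := Finset.exists_of_ssubset hB
  obtain ⟨R₀, rfl⟩ := honto a
  exact stmt16_general (B := B) hsp.maskinMonotone ⟨R₀, haB⟩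
    fun i _ hc _ hb => extendPref_of_notMem_of_mem (R i) hc hb
end

section
/- Let m, n ≥ 1 and let W be a social choice function for n agents over the alternatives [m] that is onto and strategyproof. Then W is unanimous: for every profile R = (R_1,…,R_n) and every alternative a, if a is the most preferred element of R_i for every agent i, then W(R) = a. -/
/-! Move from a profile electing `a` to the unanimous profile one agent at a time; no switch
demotes `a` below any alternative, since the new preference ranks `a` first. If a switch changed
the outcome from `a` to `c`, then either the switching agent preferred `c` to `a` before the
switch and gains by it, or it preferred `a` to `c`, still does, and gains by switching back. -/

theorem Pref.ne_of_rel {α : Type*} (σ : Pref α) {a b : α} (hab : σ.1 a b) : b ≠ a := by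
  rintro rfl
  exact σ.2.2.1 b hab

namespace SCFStrategyproof

variable {n : ℕ} {α : Type*} {W : (Fin n → Pref α) → α} {R R' : Fin n → Pref α}

theorem update_eq_of_forall_imp (hsp : SCFStrategyproof W) {i : Fin n} {σ : Pref α}
    (hσ : ∀ b, (R i).1 (W R) b → σ.1 (W R) b) : W (Function.update R i σ) = W R := by
  obtain ⟨trichotomous, -, -⟩ := (R i).2
  rcases trichotomous (W (Function.update R i σ)) (W R) with hgain | heq | hloss
  · exact absurd hgain (hsp R i σ)
  · exact heq
  · have hback : ¬ σ.1 (W R) (W (Function.update R i σ)) := by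
      simpa only [Function.update_self, Function.update_idem, Function.update_eq_self] using
        hsp (Function.update R i σ) i (R i)
    exact absurd (hσ _ hloss) hback

theorem maskin_monotone (hsp : SCFStrategyproof W)
    (hRR' : ∀ i b, (R i).1 (W R) b → (R' i).1 (W R) b) : W R' = W R := by
  have hswitch (s : Finset (Fin n)) : W (s.piecewise R' R) = W R := by
    induction s using Finset.induction_on with
    | empty => rw [Finset.piecewise_empty]
    | insert j s hj ih =>
      rw [Finset.piecewise_insert, hsp.update_eq_of_forall_imp, ih]
      rw [ih, Finset.piecewise_eq_of_notMem s R' R hj]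
      exact hRR' j
  simpa only [Finset.piecewise_univ] using hswitch Finset.univ

end SCFStrategyproof

theorem stmt17_general {n : ℕ} {α : Type*} {W : (Fin n → Pref α) → α}
    (hsp : SCFStrategyproof W) {R : Fin n → Pref α} {a : α} (ha : a ∈ Set.range W)
    (htop : ∀ i, PrefTop (R i) a) : W R = a := by
  obtain ⟨R₀, rfl⟩ := ha
  exact hsp.maskin_monotone fun i b hb => htop i b ((R₀ i).ne_of_rel hb)

theorem stmt17 (m n : ℕ) (hm : 1 ≤ m) (hn : 1 ≤ n)
    (W : (Fin n → Pref (Fin m)) → Fin m)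
    (honto : Function.Surjective W) (hsp : SCFStrategyproof W) :
    ∀ (R : Fin n → Pref (Fin m)) (a : Fin m), (∀ i, PrefTop (R i) a) → W R = a :=
  fun _ a htop => stmt17_general hsp (honto a) htop
end
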